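/- For every integer r ≥ 1 and every subset W ⊆ V(G_r) with |W| ≤ 3r² (i.e. |W| ≤ |V(G_r)|/2), the boundary of W in the finite hexagonal grid satisfies |ℬ_{G_r}(W)| ≥ c · √(|W| + c²/4) − c²/2 with c = 0.6053. -/

import Mathlib

/-- Adjacency of the infinite hexagonal grid `G∞` in brick-wall coordinates on `ℤ × ℤ`:
`(x,y)` and `(x',y')` are adjacent iff `y' = y` and `|x' - x| = 1`, or
`x' = x` and `|y' - y| = 1` and `x + min y y'` is even. -/
def hexAdj (v w : ℤ × ℤ) : Prop :=
  (v.2 = w.2 ∧ (v.1 - w.1).natAbs = 1) ∨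
  (v.1 = w.1 ∧ (v.2 - w.2).natAbs = 1 ∧ Even (v.1 + min v.2 w.2))

/-- The neighborhood `𝒩(W)`: vertices not in `W` adjacent to some vertex of `W`. -/
def hexNbhd (W : Set (ℤ × ℤ)) : Set (ℤ × ℤ) :=
  {v | v ∉ W ∧ ∃ w ∈ W, hexAdj v w}

/-- The boundary `ℬ(W)`: vertices of `W` adjacent to some vertex not in `W`. -/
def hexBdry (W : Set (ℤ × ℤ)) : Set (ℤ × ℤ) :=
  {v | v ∈ W ∧ ∃ w, w ∉ W ∧ hexAdj v w}

/-- The outgoing edges `ℰ(W)`, encoded as ordered pairs `(v, w)` with `v ∈ W`, `w ∉ W`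
and `v` adjacent to `w`; each edge with exactly one endpoint in `W` corresponds to
exactly one such pair. -/
def hexCutEdges (W : Set (ℤ × ℤ)) : Set ((ℤ × ℤ) × (ℤ × ℤ)) :=
  {p | p.1 ∈ W ∧ p.2 ∉ W ∧ hexAdj p.1 p.2}

/-- The hexagonal cell `C(a,b)`, with vertex set `{(2a+b+i, b+j) : i ∈ {0,1,2}, j ∈ {0,1}}`. -/
def hexCell (a b : ℤ) : Set (ℤ × ℤ) :=
  {(2*a+b, b), (2*a+b+1, b), (2*a+b+2, b),
   (2*a+b, b+1), (2*a+b+1, b+1), (2*a+b+2, b+1)}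

/-- The vertex set `V(G_r)` of the finite hexagonal grid of radius `r`: the union of the
cells `C(a,b)` with `(|a| + |b| + |a+b|)/2 ≤ r - 1`. -/
def gridVerts (r : ℕ) : Set (ℤ × ℤ) :=
  {v | ∃ a b : ℤ, a.natAbs + b.natAbs + (a+b).natAbs ≤ 2*(r-1) ∧ v ∈ hexCell a b}

/-- `𝒩_{G_r}(W)`: vertices of `V(G_r) \ W` adjacent to some vertex of `W`. -/
def hexNbhdIn (r : ℕ) (W : Set (ℤ × ℤ)) : Set (ℤ × ℤ) :=
  {v | v ∈ gridVerts r ∧ v ∉ W ∧ ∃ w ∈ W, hexAdj v w}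

/-- `ℬ_{G_r}(W)`: vertices of `W` adjacent to some vertex of `V(G_r) \ W`. -/
def hexBdryIn (r : ℕ) (W : Set (ℤ × ℤ)) : Set (ℤ × ℤ) :=
  {v | v ∈ W ∧ ∃ w, w ∈ gridVerts r ∧ w ∉ W ∧ hexAdj v w}

/-- `ℰ_{G_r}(W)`: the edges of `G_r` with exactly one endpoint in `W ⊆ V(G_r)`, encoded
as ordered pairs `(v, w)` with `v ∈ W`, `w ∈ V(G_r) \ W`, `v` adjacent to `w`. -/
def hexCutEdgesIn (r : ℕ) (W : Set (ℤ × ℤ)) : Set ((ℤ × ℤ) × (ℤ × ℤ)) :=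
  {p | p.1 ∈ W ∧ p.2 ∈ gridVerts r ∧ p.2 ∉ W ∧ hexAdj p.1 p.2}

/-- The index `ind_i(x,y)` of the direction-`i` row containing `(x,y)`
(directions numbered `0, 1, 2` for the paper's `1, 2, 3`):
`ind_1 = y`, `ind_2 = ⌊(y-x)/2⌋`, `ind_3 = ⌊(x+y)/2⌋`. -/
def rowInd : Fin 3 → ℤ × ℤ → ℤ
  | 0, v => v.2
  | 1, v => Int.fdiv (v.2 - v.1) 2
  | 2, v => Int.fdiv (v.1 + v.2) 2

/-- The linear parameter `p_i` along direction-`i` rows: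
`p_1 = x`, `p_2 = x + y`, `p_3 = x - y`. -/
def rowParam : Fin 3 → ℤ × ℤ → ℤ
  | 0, v => v.1
  | 1, v => v.1 + v.2
  | 2, v => v.1 - v.2

/-- A set of integers is consecutive if it contains every integer between any two of
its elements. -/
def ConsecutiveSet (S : Set ℤ) : Prop :=
  ∀ a ∈ S, ∀ b ∈ S, ∀ k : ℤ, a ≤ k → k ≤ b → k ∈ S

/-- `v` is an outermost neighbor of `W` for direction `i`: the direction-`i` row of `v`
is gray, and the parameter of `v` is `m - 1` or `M + 1`, where `m` and `M` are the
minimum and maximum of the parameter over `W` intersected with that row. -/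
def IsOutermostNeighbor (W : Set (ℤ × ℤ)) (i : Fin 3) (v : ℤ × ℤ) : Prop :=
  (rowParam i v + 1 ∈ rowParam i '' {w ∈ W | rowInd i w = rowInd i v} ∧
    ∀ q ∈ rowParam i '' {w ∈ W | rowInd i w = rowInd i v}, rowParam i v + 1 ≤ q) ∨
  (rowParam i v - 1 ∈ rowParam i '' {w ∈ W | rowInd i w = rowInd i v} ∧
    ∀ q ∈ rowParam i '' {w ∈ W | rowInd i w = rowInd i v}, q ≤ rowParam i v - 1)

/-- A two-colouring of a hexagonal grid `G` of radius `r` which changes only across `B`.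
The grid is described by three coordinates `x y z` with values in `[1 - r, r]`, whose sum is
`1` or `2`; adjacent vertices differ by one in exactly one coordinate. -/
structure HexCut {α : Type*} (r : ℤ) (G : Set α) (x y z : α → ℤ) (B : Finset α) (S : Set α) :
    Prop where
  mem_grid : ∀ v, v ∈ G ↔
    (1 - r ≤ x v ∧ x v ≤ r) ∧ (1 - r ≤ y v ∧ y v ≤ r) ∧ (1 - r ≤ z v ∧ z v ≤ r)
  sum_eq : ∀ v, x v + y v + z v = 1 ∨ x v + y v + z v = 2
  exists_coord : ∀ a b c, a + b + c = 1 ∨ a + b + c = 2 → ∃ v, x v = a ∧ y v = b ∧ z v = c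
  ext : ∀ v w, x v = x w → y v = y w → z v = z w → v = w
  step_x : ∀ v ∈ G, ∀ w ∈ G, v ∉ B → w ∉ B →
    x w = x v + 1 → y w = y v → z w = z v → (v ∈ S ↔ w ∈ S)
  step_y : ∀ v ∈ G, ∀ w ∈ G, v ∉ B → w ∉ B →
    x w = x v → y w = y v + 1 → z w = z v → (v ∈ S ↔ w ∈ S)
  step_z : ∀ v ∈ G, ∀ w ∈ G, v ∉ B → w ∉ B →
    x w = x v → y w = y v → z w = z v + 1 → (v ∈ S ↔ w ∈ S)

/-- The row `x = a` of `G` lies in `S`. -/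
def RowIn {α : Type*} (G : Set α) (x : α → ℤ) (S : Set α) (a : ℤ) : Prop :=
  ∀ v ∈ G, x v = a → v ∈ S

/-- The row `x = a` avoids `B`. -/
def CleanRow {α : Type*} (B : Finset α) (x : α → ℤ) (a : ℤ) : Prop :=
  ∀ v ∈ B, x v ≠ a

namespace HexCut

variable {α : Type*} {r : ℤ} {G : Set α} {x y z : α → ℤ} {B : Finset α} {S : Set α}

theorem rotate (h : HexCut r G x y z B S) : HexCut r G y z x B S where
  mem_grid v := by rw [h.mem_grid]; tauto
  sum_eq v := by have := h.sum_eq v; omega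
  exists_coord a b c habc := by
    obtain ⟨v, h₁, h₂, h₃⟩ := h.exists_coord c a b (by omega)
    exact ⟨v, h₂, h₃, h₁⟩
  ext v w h₁ h₂ h₃ := h.ext v w h₃ h₁ h₂
  step_x v hv w hw hvB hwB h₁ h₂ h₃ := h.step_y v hv w hw hvB hwB h₃ h₁ h₂
  step_y v hv w hw hvB hwB h₁ h₂ h₃ := h.step_z v hv w hw hvB hwB h₃ h₁ h₂
  step_z v hv w hw hvB hwB h₁ h₂ h₃ := h.step_x v hv w hw hvB hwB h₃ h₁ h₂

theorem swap (h : HexCut r G x y z B S) : HexCut r G y x z B S where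
  mem_grid v := by rw [h.mem_grid]; tauto
  sum_eq v := by have := h.sum_eq v; omega
  exists_coord a b c habc := by
    obtain ⟨v, h₁, h₂, h₃⟩ := h.exists_coord b a c (by omega)
    exact ⟨v, h₂, h₁, h₃⟩
  ext v w h₁ h₂ h₃ := h.ext v w h₂ h₁ h₃
  step_x v hv w hw hvB hwB h₁ h₂ h₃ := h.step_y v hv w hw hvB hwB h₂ h₁ h₃
  step_y v hv w hw hvB hwB h₁ h₂ h₃ := h.step_x v hv w hw hvB hwB h₂ h₁ h₃
  step_z v hv w hw hvB hwB h₁ h₂ h₃ := h.step_z v hv w hw hvB hwB h₂ h₁ h₃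

theorem compl (h : HexCut r G x y z B S) : HexCut r G x y z B Sᶜ where
  mem_grid := h.mem_grid
  sum_eq := h.sum_eq
  exists_coord := h.exists_coord
  ext := h.ext
  step_x v hv w hw hvB hwB h₁ h₂ h₃ := not_congr (h.step_x v hv w hw hvB hwB h₁ h₂ h₃)
  step_y v hv w hw hvB hwB h₁ h₂ h₃ := not_congr (h.step_y v hv w hw hvB hwB h₁ h₂ h₃)
  step_z v hv w hw hvB hwB h₁ h₂ h₃ := not_congr (h.step_z v hv w hw hvB hwB h₁ h₂ h₃)

/-- The central symmetry of the grid. -/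
theorem reflect (h : HexCut r G x y z B S) :
    HexCut r G (fun v => 1 - x v) (fun v => 1 - y v) (fun v => 1 - z v) B S where
  mem_grid v := by rw [h.mem_grid]; constructor <;> intro _ <;> omega
  sum_eq v := by have := h.sum_eq v; omega
  exists_coord a b c habc := by
    obtain ⟨v, h₁, h₂, h₃⟩ := h.exists_coord (1 - a) (1 - b) (1 - c) (by omega)
    exact ⟨v, by omega, by omega, by omega⟩
  ext v w h₁ h₂ h₃ := h.ext v w (by omega) (by omega) (by omega)
  step_x v hv w hw hvB hwB h₁ h₂ h₃ :=
    (h.step_x w hw v hv hwB hvB (by omega) (by omega) (by omega)).symm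
  step_y v hv w hw hvB hwB h₁ h₂ h₃ :=
    (h.step_y w hw v hv hwB hvB (by omega) (by omega) (by omega)).symm
  step_z v hv w hw hvB hwB h₁ h₂ h₃ :=
    (h.step_z w hw v hv hwB hvB (by omega) (by omega) (by omega)).symm

/-- Rows `x = a` and `y = b` cross inside the grid when `1 - r ≤ a + b ≤ r + 1`. -/
theorem exists_crossing (h : HexCut r G x y z B S) (hr : 1 ≤ r) {a b : ℤ} (ha : 1 - r ≤ a)
    (ha' : a ≤ r) (hb : 1 - r ≤ b) (hb' : b ≤ r) (hab : 1 - r ≤ a + b) (hab' : a + b ≤ r + 1) :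
    ∃ v ∈ G, x v = a ∧ y v = b := by
  rcases le_or_gt (a + b) r with hle | hlt
  · obtain ⟨v, h₁, h₂, h₃⟩ := h.exists_coord a b (1 - a - b) (by omega)
    exact ⟨v, by rw [h.mem_grid]; omega, h₁, h₂⟩
  · obtain ⟨v, h₁, h₂, h₃⟩ := h.exists_coord a b (2 - a - b) (by omega)
    exact ⟨v, by rw [h.mem_grid]; omega, h₁, h₂⟩

theorem mem_iff_of_cleanRow (h : HexCut r G x y z B S) {a : ℤ} (ha : CleanRow B x a) {v w : α}
    (hv : v ∈ G) (hw : w ∈ G) (hva : x v = a) (hwa : x w = a) : v ∈ S ↔ w ∈ S := by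
  have key : ∀ n : ℕ, ∀ v ∈ G, ∀ w ∈ G, x v = a → x w = a →
      y w - z w = y v - z v + n → (v ∈ S ↔ w ∈ S) := by
    intro n
    induction n with
    | zero =>
      intro v hv w hw hva hwa hn
      have h₁ := h.sum_eq v
      have h₂ := h.sum_eq w
      rw [h.ext v w (by omega) (by omega) (by omega)]
    | succ n ih =>
      intro v hv w hw hva hwa hn
      have hvs := h.sum_eq v
      have hws := h.sum_eq w
      have hvG := (h.mem_grid v).1 hv
      have hwG := (h.mem_grid w).1 hw
      have hclean : ∀ u, x u = a → u ∉ B := fun u hu huB => ha u huB hu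
      push_cast at hn
      rcases hvs with hs | hs
      · obtain ⟨u, h₁, h₂, h₃⟩ := h.exists_coord (x v) (y v + 1) (z v) (by omega)
        have hu : u ∈ G := by rw [h.mem_grid]; omega
        exact (h.step_y v hv u hu (hclean v hva) (hclean u (by omega)) h₁ h₂ h₃).trans
          (ih u hu w hw (by omega) hwa (by omega))
      · obtain ⟨u, h₁, h₂, h₃⟩ := h.exists_coord (x v) (y v) (z v - 1) (by omega)
        have hu : u ∈ G := by rw [h.mem_grid]; omega
        exact (h.step_z u hu v hv (hclean u (by omega)) (hclean v hva) h₁.symm h₂.symm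
          (by omega)).symm.trans (ih u hu w hw (by omega) hwa (by omega))
  rcases le_total (y v - z v) (y w - z w) with hle | hle
  · exact key (y w - z w - (y v - z v)).toNat v hv w hw hva hwa (by omega)
  · exact (key (y v - z v - (y w - z w)).toNat w hw v hv hwa hva (by omega)).symm

theorem rowIn_or_rowIn_compl (h : HexCut r G x y z B S) {a : ℤ} (ha : CleanRow B x a) :
    RowIn G x S a ∨ RowIn G x Sᶜ a := by
  by_contra! hne
  obtain ⟨h₁, h₂⟩ := hne
  simp only [RowIn, not_forall] at h₁ h₂
  obtain ⟨v, hv, hva, hvS⟩ := h₁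
  obtain ⟨w, hw, hwa, hwS⟩ := h₂
  exact hwS fun hwS => hvS ((h.mem_iff_of_cleanRow ha hv hw hva hwa).2 hwS)

/-- The strip `2 k ≤ y - z ≤ 2 k + 1` joins any two rows that it crosses inside the grid, so it
meets `B` if these rows have different colours. -/
theorem exists_mem_strip (h : HexCut r G x y z B S) {a b k : ℤ} (ha : 1 - r ≤ a) (hab : a ≤ b)
    (hb : b ≤ r) (haS : RowIn G x S a) (hbS : RowIn G x Sᶜ b)
    (hk₁ : b - 2 * r ≤ 2 * k) (hk₂ : 1 - 2 * r - a ≤ 2 * k)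
    (hk₃ : 2 * k + 1 ≤ 2 * r - b) (hk₄ : 2 * k + 1 ≤ 2 * r - 1 + a) :
    ∃ v ∈ B, a ≤ x v ∧ x v ≤ b ∧ (y v - z v) / 2 = k := by
  by_contra! hB
  have hgrid : ∀ v, a ≤ x v → x v ≤ b → (y v - z v) / 2 = k → v ∈ G := by
    intro v h₁ h₂ h₃
    have := h.sum_eq v
    rw [h.mem_grid]
    omega
  have key : ∀ n : ℕ, ∀ v, a ≤ x v → x v ≤ b → (y v - z v) / 2 = k →
      2 * b - 1 = 2 * x v - (x v + y v + z v) + n → v ∉ S := by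
    intro n
    induction n with
    | zero =>
      intro v h₁ h₂ h₃ hn
      have := h.sum_eq v
      exact hbS v (hgrid v h₁ h₂ h₃) (by omega)
    | succ n ih =>
      intro v h₁ h₂ h₃ hn
      have hvB : v ∉ B := fun hv => hB v hv h₁ h₂ h₃
      have hvG := hgrid v h₁ h₂ h₃
      push_cast at hn
      rcases h.sum_eq v with hs | hs
      · obtain ⟨u, e₁, e₂, e₃⟩ := h.exists_coord (x v + 1) (y v) (z v) (by omega)
        have hu := hgrid u (by omega) (by omega) (by rw [e₂, e₃]; exact h₃)
        have huB : u ∉ B := fun hu => hB u hu (by omega) (by omega) (by rw [e₂, e₃]; exact h₃)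
        rw [h.step_x v hvG u hu hvB huB e₁ e₂ e₃]
        exact ih u (by omega) (by omega) (by rw [e₂, e₃]; exact h₃) (by omega)
      · rcases Int.emod_two_eq_zero_or_one (y v - z v) with hp | hp
        · obtain ⟨u, e₁, e₂, e₃⟩ := h.exists_coord (x v) (y v) (z v - 1) (by omega)
          have huk : (y u - z u) / 2 = k := by omega
          have hu := hgrid u (by omega) (by omega) huk
          have huB : u ∉ B := fun hu => hB u hu (by omega) (by omega) huk
          rw [← h.step_z u hu v hvG huB hvB e₁.symm e₂.symm (by omega)]
          exact ih u (by omega) (by omega) huk (by omega)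
        · obtain ⟨u, e₁, e₂, e₃⟩ := h.exists_coord (x v) (y v - 1) (z v) (by omega)
          have huk : (y u - z u) / 2 = k := by omega
          have hu := hgrid u (by omega) (by omega) huk
          have huB : u ∉ B := fun hu => hB u hu (by omega) (by omega) huk
          rw [← h.step_y u hu v hvG huB hvB e₁.symm (by omega) e₃.symm]
          exact ih u (by omega) (by omega) huk (by omega)
  obtain ⟨v, hva, hvk⟩ : ∃ v, x v = a ∧ (y v - z v) / 2 = k := by
    rcases Int.emod_two_eq_zero_or_one a with hp | hp
    · obtain ⟨v, e₁, e₂, e₃⟩ := h.exists_coord a (k + 1 - a / 2) (1 - a - (k + 1 - a / 2))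
        (by omega)
      exact ⟨v, e₁, by omega⟩
    · obtain ⟨v, e₁, e₂, e₃⟩ := h.exists_coord a (k - a / 2) (1 - a - (k - a / 2))
        (by omega)
      exact ⟨v, e₁, by omega⟩
  have := h.sum_eq v
  by_cases hab' : a = b
  · exact hbS v (hgrid v (by omega) (by omega) hvk) (by omega)
      (haS v (hgrid v (by omega) (by omega) hvk) hva)
  · exact key (2 * b - 1 - (2 * x v - (x v + y v + z v))).toNat v (by omega) (by omega) hvk
      (by omega) (haS v (hgrid v (by omega) (by omega) hvk) hva)

/-- Two rows of different colours are separated by many vertices of `B`. -/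
theorem le_card_between (h : HexCut r G x y z B S) {a b l : ℤ} (ha : 1 - r ≤ a) (hab : a ≤ b)
    (hb : b ≤ r) (haS : RowIn G x S a) (hbS : RowIn G x Sᶜ b)
    (hl : l ≤ 2 * r - b) (hl' : l ≤ 2 * r - 1 + a) :
    l ≤ (B.filter fun v => a ≤ x v ∧ x v ≤ b).card := by
  have hsub : Finset.Icc (-(l / 2)) ((l - 1) / 2) ⊆
      (B.filter fun v => a ≤ x v ∧ x v ≤ b).image fun v => (y v - z v) / 2 := by
    intro k hk
    rw [Finset.mem_Icc] at hk
    obtain ⟨v, hv, h₁, h₂, h₃⟩ := h.exists_mem_strip ha hab hb haS hbS (k := k)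
      (by omega) (by omega) (by omega) (by omega)
    exact Finset.mem_image.2 ⟨v, Finset.mem_filter.2 ⟨hv, h₁, h₂⟩, h₃⟩
  have hcard := (Finset.card_le_card hsub).trans Finset.card_image_le
  rw [Int.card_Icc] at hcard
  omega

theorem exists_cleanRow {T : Finset ℤ} (x : α → ℤ) (hT : B.card < T.card) :
    ∃ a ∈ T, CleanRow B x a := by
  by_contra! hne
  refine absurd ((Finset.card_le_card (t := B.image x) fun a ha => ?_).trans
    Finset.card_image_le) hT.not_ge
  simpa [CleanRow] using hne a ha

theorem exists_cleanRow_Icc (x : α → ℤ) {a b : ℤ} (hB : (B.card : ℤ) < b - a + 1) :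
    ∃ c, a ≤ c ∧ c ≤ b ∧ CleanRow B x c := by
  obtain ⟨c, hc, hcx⟩ := exists_cleanRow (B := B) (T := Finset.Icc a b) x
    (by rw [Int.card_Icc]; omega)
  rw [Finset.mem_Icc] at hc
  exact ⟨c, hc.1, hc.2, hcx⟩

section Main

variable {e : ℤ}

/-- All clean rows `x = a` outside the `e + 1` outermost ones at each end lie in `S`. -/
def InnerRowsIn (r e : ℤ) (G : Set α) (x : α → ℤ) (B : Finset α) (S : Set α) : Prop :=
  ∀ a, 2 - r + e ≤ a → a ≤ r - e - 1 → CleanRow B x a → RowIn G x S a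

theorem innerRowsIn_of_rowIn (h : HexCut r G x y z B S) (he : -1 ≤ e) (hB : B.card ≤ r + e)
    {a : ℤ} (ha : 2 - r + e ≤ a) (ha' : a ≤ r - e - 1) (haS : RowIn G x S a) :
    InnerRowsIn r e G x B S := by
  intro b hb hb' hbc
  refine (h.rowIn_or_rowIn_compl hbc).resolve_right fun hbS => ?_
  have hle : ∀ p : α → Prop, [DecidablePred p] → (B.filter p).card ≤ B.card :=
    fun p _ => Finset.card_filter_le _ _
  rcases le_total a b with hab | hab
  · have h₁ := h.le_card_between (l := r + e + 1) (by omega) hab (by omega) haS hbS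
      (by omega) (by omega)
    have h₂ := hle fun v => a ≤ x v ∧ x v ≤ b
    omega
  · have h₁ := h.compl.le_card_between (l := r + e + 1) (by omega) hab (by omega) hbS
      (by rwa [compl_compl]) (by omega) (by omega)
    have h₂ := hle fun v => b ≤ x v ∧ x v ≤ a
    omega

theorem innerRowsIn_or_compl (h : HexCut r G x y z B S) (he : -1 ≤ e) (hr : 1 ≤ r)
    (her : 6 * e + 4 ≤ r) (hB : B.card ≤ r + e) :
    InnerRowsIn r e G x B S ∨ InnerRowsIn r e G x B Sᶜ := by
  obtain ⟨a, ha, ha', hac⟩ := exists_cleanRow_Icc (B := B) x (a := 2 - r + e) (b := r - e - 1)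
    (by omega)
  exact (h.rowIn_or_rowIn_compl hac).imp (h.innerRowsIn_of_rowIn he hB ha ha')
    (h.compl.innerRowsIn_of_rowIn he hB ha ha')

theorem InnerRowsIn.transfer (h : HexCut r G x y z B S) (he : -1 ≤ e) (hr : 1 ≤ r)
    (her : 6 * e + 4 ≤ r) (hB : B.card ≤ r + e) (hx : InnerRowsIn r e G x B S) :
    InnerRowsIn r e G y B S := by
  obtain ⟨a, ha, ha', hac⟩ := exists_cleanRow_Icc (B := B) x (a := 1 - (r + e + 2) / 2)
    (b := (r + e + 2) / 2) (by omega)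
  obtain ⟨b, hb, hb', hbc⟩ := exists_cleanRow_Icc (B := B) y
    (a := max (2 - r + e) (1 - r - a)) (b := min (r - e - 1) (r + 1 - a)) (by omega)
  obtain ⟨v, hv, hva, hvb⟩ := h.exists_crossing hr (a := a) (b := b) (by omega) (by omega)
    (by omega) (by omega) (by omega) (by omega)
  have hvS := hx a (by omega) (by omega) hac v hv hva
  refine h.rotate.innerRowsIn_of_rowIn he hB (a := b) (by omega) (by omega) ?_
  exact (h.rotate.rowIn_or_rowIn_compl hbc).resolve_right fun hb => hb v hv hvb hvS

theorem not_rowIn_compl_of_opposite (h : HexCut r G x y z B S) (he : -1 ≤ e) (hr : 1 ≤ r)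
    (her : 6 * e + 4 ≤ r) (hB : B.card ≤ r + e) (hz : InnerRowsIn r e G z B S) {a b : ℤ}
    (ha : r - e ≤ a) (ha' : a ≤ r) (hb : 1 - r ≤ b) (hb' : b ≤ 1 - r + e)
    (haS : RowIn G x Sᶜ a) (hbS : RowIn G y Sᶜ b) : False := by
  obtain ⟨c, hc, hc', hcc⟩ := exists_cleanRow_Icc (B := B) z (a := 2 - r + e) (b := r - e - 1)
    (by omega)
  have hcS := hz c hc hc' hcc
  rcases le_or_gt c 0 with h0 | h0
  · obtain ⟨v, hv, hvc, hva⟩ := h.rotate.rotate.exists_crossing hr (a := c) (b := a) (by omega)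
      (by omega) (by omega) (by omega) (by omega) (by omega)
    exact haS v hv hva (hcS v hv hvc)
  · obtain ⟨v, hv, hvb, hvc⟩ := h.rotate.exists_crossing hr (a := b) (b := c) (by omega)
      (by omega) (by omega) (by omega) (by omega) (by omega)
    exact hbS v hv hvb (hcS v hv hvc)

/-- If an extreme row `y = b` has the wrong colour, then an extreme row `x = a` of the wrong
colour is cut off by at least `r` vertices of `B` close to it. -/
theorem le_card_of_extreme (h : HexCut r G x y z B S) (he : 0 ≤ e)
    (her : 6 * e + 4 ≤ r) (hB : B.card ≤ r + e) (hx : InnerRowsIn r e G x B S) {a b : ℤ}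
    (ha : r - e ≤ a) (ha' : a ≤ r) (hb : r - e ≤ b) (hb' : b ≤ r)
    (haS : RowIn G x Sᶜ a) (hbS : RowIn G y Sᶜ b) :
    r ≤ (B.filter fun v => r - 3 * e - 1 ≤ x v).card := by
  obtain ⟨c, hc, hcc⟩ := exists_cleanRow (B := B)
    (T := Finset.Icc (2 - r + e) 1 ∪ Finset.Icc (r - 3 * e - 1) (r - e - 1)) x (by
      rw [Finset.card_union_of_disjoint, Int.card_Icc, Int.card_Icc]
      · omega
      · rw [Finset.disjoint_left]
        intro t ht ht'
        rw [Finset.mem_Icc] at ht ht'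
        omega)
  rw [Finset.mem_union, Finset.mem_Icc, Finset.mem_Icc] at hc
  have hcS := hx c (by omega) (by omega) hcc
  have hc1 : 1 < c := by
    by_contra! hle
    obtain ⟨v, hv, hvc, hvb⟩ := h.exists_crossing (by omega) (a := c) (b := b) (by omega)
      (by omega) (by omega) (by omega) (by omega) (by omega)
    exact hbS v hv hvb (hcS v hv hvc)
  have h₁ := h.le_card_between (l := r) (by omega) (by omega) ha' hcS haS (by omega) (by omega)
  have h₂ : (B.filter fun v => c ≤ x v ∧ x v ≤ a).card ≤
      (B.filter fun v => r - 3 * e - 1 ≤ x v).card := by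
    refine Finset.card_le_card (Finset.monotone_filter_right _ fun v _ hv => ?_)
    omega
  omega

theorem not_rowIn_compl_of_same_side (h : HexCut r G x y z B S) (he : -1 ≤ e)
    (her : 6 * e + 4 ≤ r) (hB : B.card ≤ r + e) (hBG : ∀ v ∈ B, v ∈ G)
    (hx : InnerRowsIn r e G x B S)
    (hy : InnerRowsIn r e G y B S) {a b : ℤ} (ha : r - e ≤ a) (ha' : a ≤ r) (hb : r - e ≤ b)
    (hb' : b ≤ r) (haS : RowIn G x Sᶜ a) (hbS : RowIn G y Sᶜ b) : False := by
  classical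
  have h₁ := h.le_card_of_extreme (by omega) her hB hx ha ha' hb hb' haS hbS
  have h₂ := h.swap.le_card_of_extreme (by omega) her hB hy hb hb' ha ha' hbS haS
  have hdisj : Disjoint (B.filter fun v => r - 3 * e - 1 ≤ x v)
      (B.filter fun v => r - 3 * e - 1 ≤ y v) := by
    rw [Finset.disjoint_left]
    intro v hv hv'
    rw [Finset.mem_filter] at hv hv'
    have := (h.mem_grid v).1 (hBG v hv.1)
    have := h.sum_eq v
    omega
  have h₃ := Finset.card_le_card (Finset.union_subset
    (Finset.filter_subset (fun v => r - 3 * e - 1 ≤ x v) B)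
    (Finset.filter_subset (fun v => r - 3 * e - 1 ≤ y v) B))
  rw [Finset.card_union_of_disjoint hdisj] at h₃
  omega

theorem InnerRowsIn.reflect (hx : InnerRowsIn r e G x B S) :
    InnerRowsIn r e G (fun v => 1 - x v) B S := by
  intro a ha ha' hac v hv hva
  refine hx (1 - a) (by omega) (by omega) (fun w hw hwa => hac w hw ?_) v hv ?_ <;> grind

theorem _root_.RowIn.reflect {a : ℤ} (hx : RowIn G x S a) : RowIn G (fun v => 1 - x v) S (1 - a) :=
  fun v hv hva => hx v hv (by simpa using hva)

/-- A clean row of the wrong colour is extreme. -/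
theorem extreme_of_rowIn_compl (h : HexCut r G x y z B S) (hr : 1 ≤ r)
    (hx : InnerRowsIn r e G x B S) {a : ℤ} (ha : 1 - r ≤ a) (ha' : a ≤ r)
    (hac : CleanRow B x a) (haS : RowIn G x Sᶜ a) : r - e ≤ a ∨ a ≤ 1 - r + e := by
  by_contra! hne
  obtain ⟨v, hv, hva, -⟩ := h.exists_crossing hr (a := a) (b := if 0 < a then 0 else 1) ha ha'
    (by split_ifs <;> omega) (by split_ifs <;> omega) (by split_ifs <;> omega)
    (by split_ifs <;> omega)
  exact haS v hv hva (hx a (by omega) (by omega) hac v hv hva)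

/-- Clean rows of the wrong colour occur in at most one of two directions. -/
theorem not_rowIn_compl_pair (h : HexCut r G x y z B S) (he : -1 ≤ e) (hr : 1 ≤ r)
    (her : 6 * e + 4 ≤ r) (hB : B.card ≤ r + e) (hBG : ∀ v ∈ B, v ∈ G)
    (hx : InnerRowsIn r e G x B S) (hy : InnerRowsIn r e G y B S)
    (hz : InnerRowsIn r e G z B S) {a b : ℤ} (ha : 1 - r ≤ a) (ha' : a ≤ r) (hb : 1 - r ≤ b)
    (hb' : b ≤ r) (hac : CleanRow B x a) (hbc : CleanRow B y b) (haS : RowIn G x Sᶜ a)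
    (hbS : RowIn G y Sᶜ b) : False := by
  rcases h.extreme_of_rowIn_compl hr hx ha ha' hac haS with h₁ | h₁ <;>
    rcases h.rotate.extreme_of_rowIn_compl hr hy hb hb' hbc hbS with h₂ | h₂
  · exact h.not_rowIn_compl_of_same_side he her hB hBG hx hy h₁ ha' h₂ hb' haS hbS
  · exact h.not_rowIn_compl_of_opposite he hr her hB hz h₁ ha' hb h₂ haS hbS
  · exact h.swap.not_rowIn_compl_of_opposite he hr her hB hz h₂ hb' ha h₁ hbS haS
  · exact h.reflect.not_rowIn_compl_of_same_side he her hB hBG hx.reflect hy.reflect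
      (by omega) (by omega) (by omega) (by omega) haS.reflect hbS.reflect

theorem mem_image_of_notMem (h : HexCut r G x y z B S)
    (hx : ∀ a, 1 - r ≤ a → a ≤ r → CleanRow B x a → ¬ RowIn G x Sᶜ a) {v : α} (hv : v ∈ G)
    (hvS : v ∉ S) : x v ∈ B.image x := by
  by_contra hne
  have hc : CleanRow B x (x v) := fun w hw hwv => hne (Finset.mem_image.2 ⟨w, hw, hwv⟩)
  have hvG := (h.mem_grid v).1 hv
  rcases h.rowIn_or_rowIn_compl hc with h₁ | h₁
  · exact hvS (h₁ v hv rfl)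
  · exact hx _ (by omega) (by omega) hc h₁

theorem card_le_of_two_directions (h : HexCut r G x y z B S)
    (hx : ∀ a, 1 - r ≤ a → a ≤ r → CleanRow B x a → ¬ RowIn G x Sᶜ a)
    (hy : ∀ a, 1 - r ≤ a → a ≤ r → CleanRow B y a → ¬ RowIn G y Sᶜ a)
    {T : Finset α} (hT : ∀ v ∈ T, v ∈ G ∧ v ∉ S) : T.card ≤ 2 * B.card ^ 2 := by
  have hle : T.card ≤ (B.image x ×ˢ B.image y ×ˢ ({1, 2} : Finset ℤ)).card := by
    refine Finset.card_le_card_of_injOn (fun v => (x v, y v, x v + y v + z v)) ?_ ?_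
    · intro v hv
      obtain ⟨hvG, hvS⟩ := hT v hv
      have := h.sum_eq v
      rw [Finset.mem_coe, Finset.mem_product, Finset.mem_product]
      exact ⟨h.mem_image_of_notMem hx hvG hvS, h.rotate.mem_image_of_notMem hy hvG hvS,
        by simpa using this⟩
    · intro v _ w _ hvw
      simp only [Prod.mk.injEq] at hvw
      exact h.ext v w hvw.1 hvw.2.1 (by omega)
  rw [Finset.card_product, Finset.card_product] at hle
  calc T.card ≤ _ := hle
    _ ≤ B.card * (B.card * 2) := by
      gcongr
      · exact Finset.card_image_le
      · exact Finset.card_image_le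
      · rfl
    _ = 2 * B.card ^ 2 := by ring

theorem card_le_of_innerRowsIn (h : HexCut r G x y z B S) (he : -1 ≤ e) (hr : 1 ≤ r)
    (her : 6 * e + 4 ≤ r) (hB : B.card ≤ r + e) (hBG : ∀ v ∈ B, v ∈ G)
    (hx : InnerRowsIn r e G x B S) {T : Finset α} (hT : ∀ v ∈ T, v ∈ G ∧ v ∉ S) :
    T.card ≤ 2 * B.card ^ 2 := by
  have hy := hx.transfer h he hr her hB
  have hz := hy.transfer h.rotate he hr her hB
  by_cases h₁ : ∀ a, 1 - r ≤ a → a ≤ r → CleanRow B x a → ¬ RowIn G x Sᶜ a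
  · by_cases h₂ : ∀ a, 1 - r ≤ a → a ≤ r → CleanRow B y a → ¬ RowIn G y Sᶜ a
    · exact h.card_le_of_two_directions h₁ h₂ hT
    · push Not at h₂
      obtain ⟨b, hb, hb', hbc, hbS⟩ := h₂
      refine h.rotate.rotate.card_le_of_two_directions (fun c hc hc' hcc hcS => ?_) h₁ hT
      exact h.rotate.not_rowIn_compl_pair he hr her hB hBG hy hz hx hb hb' hc hc' hbc hcc hbS hcS
  · push Not at h₁
    obtain ⟨a, ha, ha', hac, haS⟩ := h₁
    refine h.rotate.card_le_of_two_directions (fun b hb hb' hbc hbS => ?_)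
      (fun c hc hc' hcc hcS => ?_) hT
    · exact h.not_rowIn_compl_pair he hr her hB hBG hx hy hz ha ha' hb hb' hac hbc haS hbS
    · exact h.rotate.rotate.not_rowIn_compl_pair he hr her hB hBG hz hx hy hc hc' ha ha' hcc hac
        hcS haS

/-- If `B` is small, then one of the colour classes has at most `2 |B|²` vertices. -/
theorem card_le_or_card_le (h : HexCut r G x y z B S) (he : -1 ≤ e) (hr : 1 ≤ r)
    (her : 6 * e + 4 ≤ r) (hB : B.card ≤ r + e) (hBG : ∀ v ∈ B, v ∈ G) {T U : Finset α}
    (hT : ∀ v ∈ T, v ∈ G ∧ v ∈ S) (hU : ∀ v ∈ U, v ∈ G ∧ v ∉ S) :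
    T.card ≤ 2 * B.card ^ 2 ∨ U.card ≤ 2 * B.card ^ 2 := by
  rcases h.innerRowsIn_or_compl he hr her hB with hx | hx
  · exact Or.inr (h.card_le_of_innerRowsIn he hr her hB hBG hx hU)
  · exact Or.inl (h.compl.card_le_of_innerRowsIn he hr her hB hBG hx (by simpa using hT))

end Main

theorem card_rhombus (h : HexCut r G x y z B S) (hr : 1 ≤ r) {T : Finset α}
    (hT : ∀ v, v ∈ T ↔ v ∈ G) :
    2 * r ^ 2 ≤ (T.filter fun v => 1 ≤ x v ∧ y v ≤ 0).card := by
  have hsub : Finset.Icc 1 r ×ˢ Finset.Icc (1 - r) 0 ×ˢ ({1, 2} : Finset ℤ) ⊆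
      (T.filter fun v => 1 ≤ x v ∧ y v ≤ 0).image fun v => (x v, y v, x v + y v + z v) := by
    rintro ⟨a, b, s⟩ hs
    simp only [Finset.mem_product, Finset.mem_Icc, Finset.mem_insert, Finset.mem_singleton] at hs
    obtain ⟨v, h₁, h₂, h₃⟩ := h.exists_coord a b (s - a - b) (by omega)
    refine Finset.mem_image.2 ⟨v, Finset.mem_filter.2 ⟨(hT v).2 ((h.mem_grid v).2 ?_), ?_⟩, ?_⟩
    · omega
    · omega
    · simp only [h₁, h₂, h₃, Prod.mk.injEq, true_and]
      ring
  have hcard := (Finset.card_le_card hsub).trans Finset.card_image_le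
  rw [Finset.card_product, Finset.card_product, Int.card_Icc, Int.card_Icc] at hcard
  have h₁ : ((r + 1 - 1).toNat : ℤ) = r := by omega
  have h₂ : ((0 + 1 - (1 - r)).toNat : ℤ) = r := by omega
  zify at hcard
  rw [h₁, h₂] at hcard
  norm_num at hcard
  linarith

/-- The grid splits into three rhombi. -/
theorem card_grid (h : HexCut r G x y z B S) (hr : 1 ≤ r) {T : Finset α}
    (hT : ∀ v, v ∈ T ↔ v ∈ G) : 6 * r ^ 2 ≤ T.card := by
  classical
  have h₁ := h.card_rhombus hr hT
  have h₂ := h.rotate.card_rhombus hr hT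
  have h₃ := h.rotate.rotate.card_rhombus hr hT
  have hd : Disjoint (T.filter fun v => 1 ≤ x v ∧ y v ≤ 0)
      (T.filter fun v => 1 ≤ y v ∧ z v ≤ 0) := by
    rw [Finset.disjoint_filter]
    intros
    omega
  have hd' : Disjoint ((T.filter fun v => 1 ≤ x v ∧ y v ≤ 0) ∪
      (T.filter fun v => 1 ≤ y v ∧ z v ≤ 0)) (T.filter fun v => 1 ≤ z v ∧ x v ≤ 0) := by
    rw [Finset.disjoint_union_left, Finset.disjoint_filter, Finset.disjoint_filter]
    constructor <;> intros <;> omega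
  have hle := Finset.card_le_card (Finset.union_subset (Finset.union_subset
    (Finset.filter_subset (fun v => 1 ≤ x v ∧ y v ≤ 0) T)
    (Finset.filter_subset (fun v => 1 ≤ y v ∧ z v ≤ 0) T))
    (Finset.filter_subset (fun v => 1 ≤ z v ∧ x v ≤ 0) T))
  rw [Finset.card_union_of_disjoint hd', Finset.card_union_of_disjoint hd] at hle
  zify at hle
  linarith

end HexCut

theorem mem_gridVerts_iff {r : ℕ} (hr : 1 ≤ r) (v : ℤ × ℤ) : v ∈ gridVerts r ↔
    (1 - (r : ℤ) ≤ v.2 ∧ v.2 ≤ r) ∧ (1 - (r : ℤ) ≤ -((v.2 - v.1) / 2) ∧ -((v.2 - v.1) / 2) ≤ r) ∧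
      (1 - (r : ℤ) ≤ 1 - (v.1 + v.2) / 2 ∧ 1 - (v.1 + v.2) / 2 ≤ r) := by
  obtain ⟨p, q⟩ := v
  simp only [gridVerts, hexCell, Set.mem_ofPred_eq, Set.mem_insert_iff, Set.mem_singleton_iff,
    Prod.mk.injEq]
  constructor
  · rintro ⟨a, b, hab, hv⟩
    omega
  · intro hv
    obtain ⟨y, hy⟩ : ∃ y, y = -((q - p) / 2) := ⟨_, rfl⟩
    obtain ⟨z, hz⟩ : ∃ z, z = 1 - (p + q) / 2 := ⟨_, rfl⟩
    rw [← hy, ← hz] at hv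
    have hs : (q + y + z = 1 ∧ p = y - z + 1) ∨ (q + y + z = 2 ∧ p = y - z + 1) := by omega
    rcases hs with ⟨hs, hp⟩ | ⟨hs, hp⟩
    · by_cases h₁ : y ≤ q ∧ z ≤ q
      · exact ⟨y, q - 1, by omega, by omega⟩
      by_cases h₂ : q ≤ y ∧ z ≤ y
      · exact ⟨y - 1, q, by omega, by omega⟩
      exact ⟨y, q, by omega, by omega⟩
    · by_cases h₁ : q ≤ y ∧ q ≤ z
      · exact ⟨y - 1, q, by omega, by omega⟩
      by_cases h₂ : y ≤ q ∧ y ≤ z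
      · exact ⟨y, q - 1, by omega, by omega⟩
      exact ⟨y - 1, q - 1, by omega, by omega⟩

theorem gridVerts_finite {r : ℕ} (hr : 1 ≤ r) : (gridVerts r).Finite := by
  refine ((Set.finite_Icc (-3 * (r : ℤ)) (3 * r)).prod
    (Set.finite_Icc (-3 * (r : ℤ)) (3 * r))).subset fun v hv => ?_
  rw [mem_gridVerts_iff hr] at hv
  simp only [Set.mem_prod, Set.mem_Icc]
  omega

theorem hexAdj_symm {v w : ℤ × ℤ} (h : hexAdj v w) : hexAdj w v := by
  simp only [hexAdj, Int.even_iff] at h ⊢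
  omega

theorem mem_iff_of_notMem_hexBdryIn {r : ℕ} {W : Set (ℤ × ℤ)} {v w : ℤ × ℤ}
    (hv : v ∈ gridVerts r) (hw : w ∈ gridVerts r) (hvB : v ∉ hexBdryIn r W)
    (hwB : w ∉ hexBdryIn r W) (h : hexAdj v w) : v ∈ W ↔ w ∈ W := by
  constructor <;> intro hW <;> by_contra hne
  · exact hvB ⟨hW, w, hw, hne, h⟩
  · exact hwB ⟨hW, v, hv, hne, hexAdj_symm h⟩

theorem hexCut_hexBdryIn {r : ℕ} (hr : 1 ≤ r) {W : Set (ℤ × ℤ)} {B : Finset (ℤ × ℤ)}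
    (hB : ∀ v, v ∈ B ↔ v ∈ hexBdryIn r W) :
    HexCut r (gridVerts r) (fun v => v.2) (fun v => -((v.2 - v.1) / 2))
      (fun v => 1 - (v.1 + v.2) / 2) B W where
  mem_grid := mem_gridVerts_iff hr
  sum_eq v := by omega
  exists_coord a b c habc := ⟨(b - c + 1, a), rfl, by dsimp only; omega, by dsimp only; omega⟩
  ext v w h₁ h₂ h₃ := Prod.ext (by omega) h₁
  step_x v hv w hw hvB hwB h₁ h₂ h₃ := by
    rw [hB] at hvB hwB
    refine mem_iff_of_notMem_hexBdryIn hv hw hvB hwB ?_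
    simp only [hexAdj, Int.even_iff]
    omega
  step_y v hv w hw hvB hwB h₁ h₂ h₃ := by
    rw [hB] at hvB hwB
    refine mem_iff_of_notMem_hexBdryIn hv hw hvB hwB ?_
    simp only [hexAdj, Int.even_iff]
    omega
  step_z v hv w hw hvB hwB h₁ h₂ h₃ := by
    rw [hB] at hvB hwB
    refine mem_iff_of_notMem_hexBdryIn hv hw hvB hwB ?_
    simp only [hexAdj, Int.even_iff]
    omega

theorem mul_sqrt_sub_le {c n b : ℝ} (hc : 0 < c) (hb : 0 ≤ b)
    (h : c ^ 2 * n ≤ b ^ 2 + c ^ 2 * b) : c * √(n + c ^ 2 / 4) - c ^ 2 / 2 ≤ b := by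
  have hsqrt : √(n + c ^ 2 / 4) ≤ (b + c ^ 2 / 2) / c := by
    refine Real.sqrt_le_iff.2 ⟨by positivity, ?_⟩
    rw [div_pow, le_div_iff₀ (by positivity)]
    nlinarith
  rw [le_div_iff₀ hc] at hsqrt
  linarith

/-- Either `b` is so large that the isoperimetric bound holds for every set of at most `3 r²`
vertices, or `b` exceeds `r` by little. -/
theorem large_or_exists_excess (r b : ℤ) (hr : 1 ≤ r) :
    (0.6053 : ℝ) ^ 2 * (3 * r ^ 2) ≤ b ^ 2 + (0.6053 : ℝ) ^ 2 * b ∨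
      ∃ e : ℤ, -1 ≤ e ∧ 6 * e + 4 ≤ r ∧ b ≤ r + e := by
  by_cases hbr : b < r
  · exact Or.inr ⟨-1, by omega, by omega, by omega⟩
  by_cases her : 6 * (b - r) + 4 ≤ r
  · exact Or.inr ⟨b - r, by omega, her, by omega⟩
  left
  obtain ⟨e, rfl⟩ : ∃ e, b = r + e := ⟨b - r, by ring⟩
  have he : (0 : ℝ) ≤ e := by exact_mod_cast (by omega : 0 ≤ e)
  have her' : (r : ℝ) ≤ 6 * e + 3 := by exact_mod_cast (by omega : r ≤ 6 * e + 3)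
  have hr' : (1 : ℝ) ≤ r := by exact_mod_cast hr
  push_cast
  nlinarith [mul_le_mul_of_nonneg_left her' (by linarith : (0 : ℝ) ≤ r),
    mul_nonneg he (by linarith : (0 : ℝ) ≤ r), sq_nonneg (e : ℝ)]

/-- For every `r ≥ 1` and every `W ⊆ V(G_r)` with `|W| ≤ 3r²`,
`|ℬ_{G_r}(W)| ≥ c·√(|W| + c²/4) - c²/2` with `c = 0.6053`. -/
theorem finite_hex_boundary_isoperimetric (r : ℕ) (hr : 1 ≤ r) (W : Set (ℤ × ℤ))
    (hWsub : W ⊆ gridVerts r) (hWfin : W.Finite) (hcard : W.ncard ≤ 3*r^2) :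
    (0.6053 : ℝ) * Real.sqrt ((W.ncard : ℝ) + (0.6053 : ℝ)^2 / 4) - (0.6053 : ℝ)^2 / 2 ≤
      ((hexBdryIn r W).ncard : ℝ) := by
  classical
  have hBW : hexBdryIn r W ⊆ W := fun v hv => hv.1
  have hBfin := hWfin.subset hBW
  have hGfin := gridVerts_finite hr
  set B := hBfin.toFinset
  have hBmem : ∀ v, v ∈ B ↔ v ∈ hexBdryIn r W := fun v => hBfin.mem_toFinset
  have hcut := hexCut_hexBdryIn hr hBmem
  have hr' : (1 : ℤ) ≤ r := by exact_mod_cast hr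
  have hBcard : (hexBdryIn r W).ncard = B.card := Set.ncard_eq_toFinset_card _ hBfin
  have hWcard : W.ncard = hWfin.toFinset.card := Set.ncard_eq_toFinset_card _ hWfin
  refine mul_sqrt_sub_le (by norm_num) (by positivity) ?_
  rw [hBcard]
  have hcard' : (W.ncard : ℝ) ≤ 3 * (r : ℝ) ^ 2 := by exact_mod_cast hcard
  rcases large_or_exists_excess r B.card hr' with hlarge | ⟨e, he, her, hBe⟩
  · push_cast at hlarge
    nlinarith
  have hgrid := hcut.card_grid hr' fun v => hGfin.mem_toFinset
  have hWG : hWfin.toFinset ⊆ hGfin.toFinset := by simpa using hWsub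
  have hsplit := hcut.card_le_or_card_le he hr' her hBe
    (fun v hv => hWsub (hBW ((hBmem v).1 hv)))
    (T := hWfin.toFinset) (U := hGfin.toFinset \ hWfin.toFinset)
    (fun v hv => by
      rw [Set.Finite.mem_toFinset] at hv
      exact ⟨hWsub hv, hv⟩)
    (fun v hv => by simpa using hv)
  have hbound : W.ncard ≤ 2 * B.card ^ 2 := by
    rcases hsplit with h | h
    · omega
    · have := Finset.card_sdiff_add_card_eq_card hWG
      zify at *
      linarith
  have hbound' : (W.ncard : ℝ) ≤ 2 * (B.card : ℝ) ^ 2 := by exact_mod_cast hbound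
  nlinarith [sq_nonneg (B.card : ℝ)]
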